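/- Let A₁, A₂, A₃ be hermitian 4×4 complex matrices, let P ∈ M₄(ℂ) be a nonzero orthogonal projection (P = P* = P²), and let p₁, p₂, p₃ ∈ ℝ satisfy AᵢP = pᵢP for i = 1,2,3. If the joint numerical range W = W(A₁,A₂,A₃) has a one-dimensional nonexposed face, then (p₁,p₂,p₃) is a corner point of W. -/

import Mathlib

open Matrix ComplexOrder

noncomputable section

/-- A density matrix: positive semidefinite with unit trace. -/
def IsDensity {n : Type*} [Fintype n] (ρ : Matrix n n ℂ) : Prop :=
  ρ.PosSemidef ∧ ρ.trace = 1

/-- The measurement map `ρ ↦ (tr ρA₁, …, tr ρA_k)` (the traces are real for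
hermitian matrices). -/
def wpt {n : Type*} [Fintype n] {k : ℕ} (A : Fin k → Matrix n n ℂ)
    (ρ : Matrix n n ℂ) : Fin k → ℝ :=
  fun i => ((ρ * A i).trace).re

/-- The joint numerical range of `k` matrices. -/
def JNR {n : Type*} [Fintype n] {k : ℕ} (A : Fin k → Matrix n n ℂ) :
    Set (Fin k → ℝ) :=
  wpt A '' {ρ | IsDensity ρ}

/-- `F` is a face of the convex set `C`: a convex subset such that whenever an
open segment between two points of `C` meets `F`, both endpoints lie in `F`. -/
def IsFaceOf {E : Type*} [AddCommGroup E] [Module ℝ E] (C F : Set E) : Prop :=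
  Convex ℝ F ∧ IsExtreme ℝ C F

/-- The dimension of a convex set: the dimension of its affine hull. -/
def convDim {E : Type*} [AddCommGroup E] [Module ℝ E] (F : Set E) : ℕ :=
  Module.finrank ℝ (affineSpan ℝ F).direction

/-- Euclidean dot product on `Fin d → ℝ`. -/
def dotR {d : ℕ} (u v : Fin d → ℝ) : ℝ := ∑ i, u i * v i

/-- `F` is an exposed face of `C`: the set of minimizers of a linear functional. -/
def IsExposedFace {d : ℕ} (C F : Set (Fin d → ℝ)) : Prop :=
  ∃ u : Fin d → ℝ, F = {x ∈ C | ∀ y ∈ C, dotR u x ≤ dotR u y}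

/-- The normal cone of `C` at `p`. -/
def normalConeAt {d : ℕ} (C : Set (Fin d → ℝ)) (p : Fin d → ℝ) :
    Set (Fin d → ℝ) :=
  {u | ∀ y ∈ C, 0 ≤ dotR (y - p) u}

/-- `p` is a corner point of `C` if the normal cone of `C` at `p` spans `ℝ^d`. -/
def IsCornerPoint {d : ℕ} (C : Set (Fin d → ℝ)) (p : Fin d → ℝ) : Prop :=
  p ∈ C ∧ Submodule.span ℝ (normalConeAt C p) = ⊤

/-- The closed unit disk of `ℝ²`. -/
def unitDisk2 : Set (Fin 2 → ℝ) := {v | v 0 ^ 2 + v 1 ^ 2 ≤ 1}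

/-- An elliptic disk in `ℝ³`: the image of the closed unit disk of `ℝ²` under an
injective affine map. -/
def IsEllipticDisk (F : Set (Fin 3 → ℝ)) : Prop :=
  ∃ f : (Fin 2 → ℝ) →ᵃ[ℝ] (Fin 3 → ℝ), Function.Injective f ∧ F = f '' unitDisk2

/-- A non-elliptic face of `W`: a two-dimensional face that is not an elliptic
disk. -/
def IsNonEllipticFace (W F : Set (Fin 3 → ℝ)) : Prop :=
  IsFaceOf W F ∧ convDim F = 2 ∧ ¬ IsEllipticDisk F

/-- A rank-3 face of the joint numerical range of `A`. -/
def IsRank3Face {k : ℕ} (A : Fin k → Matrix (Fin 4) (Fin 4) ℂ)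
    (F : Set (Fin k → ℝ)) : Prop :=
  F.Nonempty ∧ IsFaceOf (JNR A) F ∧
    ∃ P : Matrix (Fin 4) (Fin 4) ℂ, Pᴴ = P ∧ P * P = P ∧ P.rank = 3 ∧
      ∀ ρ : Matrix (Fin 4) (Fin 4) ℂ, IsDensity ρ → (wpt A ρ ∈ F ↔ P * ρ * P = ρ)

/-!
With `Q = 1 - P`, each `Aᵢ` is the orthogonal sum of the scalar `pᵢ` on the range of `P` and its
compression by `Q`, so `W` is the convex hull of `p` and the set `W'` of values at density matrices
that vanish on the range of `P`. Being compact and convex, `W'` is strictly separated from `p` by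
an open set of functionals if `p ∉ W'`, and then `p` is a corner point.

If `p ∈ W'`, then `W = W'` and every face `G` with more than one point is exposed. Indeed, if
`G ≠ W`, then `G` lies in a proper exposed face, which by positivity of `∑ uᵢ Aᵢ - c` consists of
the values at density matrices vanishing on a subspace `L` strictly larger than the range of `P`,
hence of codimension at most two. Two distinct such density matrices have a traceless nonzero
hermitian difference, so one of rank at least two, and their midpoint has kernel exactly `L`. As
every density matrix vanishing on `L` is an endpoint of an open segment through this midpoint,
the face `G` contains the whole exposed face.
-/

section ConvexGeometry

variable {E : Type*} [NormedAddCommGroup E] [NormedSpace ℝ E]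

open Topology

lemma exists_mem_openSegment_of_mem_intrinsicInterior {s : Set E} {x y : E}
    (hx : x ∈ intrinsicInterior ℝ s) (hy : y ∈ s) : ∃ z ∈ s, x ∈ openSegment ℝ y z := by
  obtain ⟨x, hx_interior, rfl⟩ := mem_intrinsicInterior.1 hx
  let ray (t : ℝ) : affineSpan ℝ s :=
    ⟨AffineMap.lineMap y (x : E) t,
      AffineMap.lineMap_mem t (subset_affineSpan ℝ s hy) x.2⟩
  have ray_continuous : Continuous ray :=
    Continuous.subtype_mk AffineMap.lineMap_continuous _
  have ray_one : ray 1 = x := Subtype.ext (AffineMap.lineMap_apply_one y (x : E))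
  have ray_mem : ∀ᶠ t in 𝓝[>] (1 : ℝ), ray t ∈ ((↑) ⁻¹' s : Set (affineSpan ℝ s)) :=
    (ray_continuous.tendsto' 1 x ray_one).mono_left nhdsWithin_le_nhds
      (mem_interior_iff_mem_nhds.1 hx_interior)
  obtain ⟨t, ht, one_lt⟩ := (ray_mem.and self_mem_nhdsWithin).exists
  replace one_lt : 1 < t := one_lt
  refine ⟨_, ht, openSegment_eq_image_lineMap ℝ y (ray t : E) ▸
    ⟨t⁻¹, ⟨by positivity, inv_lt_one_of_one_lt₀ one_lt⟩, ?_⟩⟩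
  rw [AffineMap.lineMap_lineMap_right, inv_mul_cancel₀ (by positivity), AffineMap.lineMap_apply_one]

lemma exists_forall_le_and_lt_of_notMem_interior {s : Set E} (hs : Convex ℝ s)
    (hs_int : (interior s).Nonempty) {x : E} (hx : x ∉ interior s) :
    ∃ f : StrongDual ℝ E, (∀ y ∈ s, f x ≤ f y) ∧ ∃ y ∈ s, f x < f y := by
  obtain ⟨f, hf⟩ := geometric_hahn_banach_point_open hs.interior isOpen_interior hx
  refine ⟨f, fun y hy => ?_, hs_int.imp fun y hy => ⟨interior_subset hy, hf y hy⟩⟩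
  have hclosure : closure (interior s) ⊆ {y | f x ≤ f y} :=
    closure_minimal (fun y hy => (hf y hy).le) (isClosed_le continuous_const f.continuous)
  rw [hs.closure_interior_eq_closure_of_nonempty_interior hs_int] at hclosure
  exact hclosure (subset_closure hy)

lemma exists_forall_le_and_lt_of_notMem_intrinsicInterior [FiniteDimensional ℝ E] {s : Set E}
    (hs : Convex ℝ s) {x : E} (hxs : x ∈ s) (hx : x ∉ intrinsicInterior ℝ s) :
    ∃ f : E →ₗ[ℝ] ℝ, (∀ y ∈ s, f x ≤ f y) ∧ ∃ y ∈ s, f x < f y := by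
  -- Translated by `-x` into the direction of its affine span, `s` has nonempty interior.
  let x' : affineSpan ℝ s := ⟨x, subset_affineSpan ℝ s hxs⟩
  have : Nonempty (affineSpan ℝ s) := ⟨x'⟩
  let e := (AffineIsometryEquiv.vaddConst ℝ x').toHomeomorph
  let t : Set (affineSpan ℝ s).direction := e ⁻¹' ((↑) ⁻¹' s)
  have ht : Convex ℝ t := by
    intro v hv w hw a b ha hb hab
    change (↑(a • v + b • w) : E) + x ∈ s
    convert hs hv hw ha hb hab using 1
    change a • (v : E) + b • (w : E) + x = a • ((v : E) + x) + b • ((w : E) + x)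
    rw [smul_add, smul_add, add_add_add_comm, ← add_smul, hab, one_smul]
  have interior_t : interior t = e ⁻¹' interior ((↑) ⁻¹' s) := (e.preimage_interior _).symm
  have mem_t {y : E} (hy : y ∈ s) : ∃ v ∈ t, (v : E) = y - x :=
    ⟨⟨y -ᵥ x, AffineSubspace.vsub_mem_direction (subset_affineSpan ℝ s hy) x'.2⟩,
      show (y - x) + x ∈ s by rwa [sub_add_cancel], rfl⟩
  have ht_int : (interior t).Nonempty := by
    obtain ⟨_, y, hy, -⟩ := Set.Nonempty.intrinsicInterior hs ⟨x, hxs⟩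
    rw [interior_t]
    exact Set.Nonempty.preimage ⟨y, hy⟩ e.surjective
  have hzero : 0 ∉ interior t := by
    rw [interior_t]
    intro h
    have e_zero : e 0 = x' := Subtype.ext (zero_add x)
    rw [Set.mem_preimage, e_zero] at h
    exact hx ⟨x', h, rfl⟩
  obtain ⟨f, hf, v₀, hv₀, hlt⟩ := exists_forall_le_and_lt_of_notMem_interior ht ht_int hzero
  obtain ⟨g, hg⟩ := LinearMap.exists_extend f.toLinearMap
  have g_apply (v : (affineSpan ℝ s).direction) : g v = f v := LinearMap.congr_fun hg v
  refine ⟨g, fun y hy => ?_, v₀ + x, hv₀, ?_⟩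
  · obtain ⟨v, hv, hvy⟩ := mem_t hy
    simpa [← g_apply, hvy] using hf v hv
  · simpa [← g_apply] using hlt

end ConvexGeometry

section Faces

open Topology

variable {d : ℕ} {C F G : Set (Fin d → ℝ)}

lemma dotR_eq_dotProduct (u v : Fin d → ℝ) : dotR u v = u ⬝ᵥ v := rfl

lemma isExposedFace_self (C : Set (Fin d → ℝ)) : IsExposedFace C C :=
  ⟨0, by simp [dotR_eq_dotProduct]⟩

lemma nontrivial_of_convDim_ne_zero {E : Type*} [AddCommGroup E] [Module ℝ E] {F : Set E}
    (h : convDim F ≠ 0) : F.Nontrivial := by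
  rw [← Set.not_subsingleton_iff]
  intro hF
  rw [convDim, direction_affineSpan, vectorSpan_of_subsingleton ℝ hF, finrank_bot] at h
  exact h rfl

lemma IsExposedFace.isExtreme (hF : IsExposedFace C F) : IsExtreme ℝ C F := by
  obtain ⟨u, rfl⟩ := hF
  refine IsExposed.isExtreme (𝕜 := ℝ)
    fun _ => ⟨-LinearMap.toContinuousLinearMap (dotProductEquiv ℝ (Fin d) u), ?_⟩
  simp [dotR_eq_dotProduct]

namespace IsFaceOf

lemma eq_of_mem_intrinsicInterior {E : Type*} [NormedAddCommGroup E] [NormedSpace ℝ E]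
    {C G : Set E} {x : E} (hG : IsFaceOf C G) (hxG : x ∈ G) (hxC : x ∈ intrinsicInterior ℝ C) :
    G = C := by
  refine hG.2.subset.antisymm fun y hy => ?_
  obtain ⟨z, hz, hxyz⟩ := exists_mem_openSegment_of_mem_intrinsicInterior hxC hy
  exact hG.2.left_mem_of_mem_openSegment hy hz hxG hxyz

lemma exists_isExposedFace_superset (hC : Convex ℝ C) (hG : IsFaceOf C G) (hne : G.Nonempty)
    (hGC : G ≠ C) : ∃ F, IsExposedFace C F ∧ G ⊆ F ∧ F ≠ C := by
  obtain ⟨m, hm⟩ := hne.intrinsicInterior hG.1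
  have hmG := intrinsicInterior_subset hm
  have hmC := hG.2.subset hmG
  obtain ⟨f, hf, y₀, hy₀, hlt⟩ := exists_forall_le_and_lt_of_notMem_intrinsicInterior hC
    hmC fun h => hGC (hG.eq_of_mem_intrinsicInterior hmG h)
  obtain ⟨u, rfl⟩ := (dotProductEquiv ℝ (Fin d)).surjective f
  have hF : IsExposedFace C {x ∈ C | ∀ y ∈ C, dotR u x ≤ dotR u y} := ⟨u, rfl⟩
  refine ⟨_, hF, fun y hy => ?_, fun h => ?_⟩
  · obtain ⟨z, hz, hmyz⟩ := exists_mem_openSegment_of_mem_intrinsicInterior hm hy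
    exact hF.isExtreme.left_mem_of_mem_openSegment (hG.2.subset hy) (hG.2.subset hz) ⟨hmC, hf⟩ hmyz
  · rw [← h] at hy₀
    exact hlt.not_ge (hy₀.2 m hmC)

end IsFaceOf

lemma isCornerPoint_convexHull_insert {K : Set (Fin d → ℝ)} (hK : IsCompact K)
    (hKc : Convex ℝ K) {p : Fin d → ℝ} (hp : p ∉ K) :
    IsCornerPoint (convexHull ℝ (insert p K)) p := by
  refine ⟨subset_convexHull ℝ _ (Set.mem_insert p K), ?_⟩
  have mem_cone {u : Fin d → ℝ} (hu : ∀ y ∈ K, 0 < (y - p) ⬝ᵥ u) :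
      u ∈ normalConeAt (convexHull ℝ (insert p K)) p := by
    suffices convexHull ℝ (insert p K) ⊆ {y | p ⬝ᵥ u ≤ y ⬝ᵥ u} by
      intro y hy
      rw [dotR_eq_dotProduct, sub_dotProduct, sub_nonneg]
      exact this hy
    refine convexHull_min (Set.insert_subset (Set.mem_ofPred.2 le_rfl) fun y hy => ?_)
      (convex_halfSpace_ge ⟨fun _ _ => add_dotProduct _ _ _, fun _ _ => smul_dotProduct _ _ _⟩ _)
    simpa [sub_dotProduct] using (hu y hy).le
  obtain ⟨f, c, hfp, hfK⟩ := geometric_hahn_banach_point_closed hKc hK.isClosed hp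
  obtain ⟨u₀, hu₀⟩ := (dotProductEquiv ℝ (Fin d)).surjective f.toLinearMap
  have u₀_apply (y : Fin d → ℝ) : y ⬝ᵥ u₀ = f y := by
    rw [dotProduct_comm]
    exact LinearMap.congr_fun hu₀ y
  have cone_mem_nhds : ∀ᶠ u in 𝓝 u₀, ∀ y ∈ K, 0 < (y - p) ⬝ᵥ u := by
    refine hK.eventually_forall_of_forall_eventually fun y hy => ?_
    have hcont : Continuous fun z : (Fin d → ℝ) × (Fin d → ℝ) => (z.2 - p) ⬝ᵥ z.1 := by fun_prop
    refine hcont.continuousAt.eventually (lt_mem_nhds ?_)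
    change 0 < (y - p) ⬝ᵥ u₀
    rw [sub_dotProduct, u₀_apply, u₀_apply, sub_pos]
    exact hfp.trans (hfK y hy)
  refine Submodule.eq_top_of_nonempty_interior' _ ⟨u₀, mem_interior_iff_mem_nhds.2 ?_⟩
  exact Filter.mem_of_superset cone_mem_nhds fun u hu => Submodule.subset_span (mem_cone hu)

end Faces

section LinearAlgebra

lemma exists_comp_eq_of_ker_le_ker {𝕜 V V₂ V₃ : Type*} [Field 𝕜] [AddCommGroup V] [Module 𝕜 V]
    [AddCommGroup V₂] [Module 𝕜 V₂] [AddCommGroup V₃] [Module 𝕜 V₃] {f : V →ₗ[𝕜] V₂}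
    {g : V →ₗ[𝕜] V₃} (h : LinearMap.ker f ≤ LinearMap.ker g) : ∃ φ : V₂ →ₗ[𝕜] V₃, φ ∘ₗ f = g := by
  obtain ⟨φ, hφ⟩ := LinearMap.exists_extend
    ((LinearMap.ker f).liftQ g h ∘ₗ f.quotKerEquivRange.symm.toLinearMap)
  refine ⟨φ, LinearMap.ext fun x => ?_⟩
  simpa using LinearMap.congr_fun hφ (f.quotKerEquivRange (Submodule.Quotient.mk x))

lemma range_mulVecLin_le_ker_iff {R l m n : Type*} [CommSemiring R] [Fintype m] [Fintype n]
    {M : Matrix l m R} {N : Matrix m n R} :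
    LinearMap.range N.mulVecLin ≤ LinearMap.ker M.mulVecLin ↔ M * N = 0 := by
  classical
  rw [LinearMap.range_le_ker_iff, ← mulVecLin_mul, ← toLin'_apply', LinearEquiv.map_eq_zero_iff]

lemma rank_pos_of_ne_zero {𝕜 m n : Type*} [Field 𝕜] [Finite m] [Fintype n] {M : Matrix m n 𝕜}
    (hM : M ≠ 0) : 0 < M.rank := by
  classical
  rw [Matrix.rank, ← toLin'_apply']
  refine Submodule.one_le_finrank_iff.2 fun h => hM ?_
  rwa [LinearMap.range_eq_bot, LinearEquiv.map_eq_zero_iff] at h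

lemma trace_mul_mul_self_of_isIdempotentElem {R n : Type*} [CommSemiring R]
    [Fintype n] {Q : Matrix n n R} (hQ : IsIdempotentElem Q) (M : Matrix n n R) :
    (Q * M * Q).trace = (M * Q).trace := by
  rw [trace_mul_comm, ← Matrix.mul_assoc, hQ.eq, trace_mul_comm]

end LinearAlgebra

section PosSemidef

variable {n : Type*} [Fintype n]

lemma posSemidef_mul_mul_self_of_isSelfAdjoint {𝕜 : Type*} [RCLike 𝕜] {M Q : Matrix n n 𝕜}
    (hM : M.PosSemidef) (hQ : IsSelfAdjoint Q) : (Q * M * Q).PosSemidef := by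
  have h := hM.conjTranspose_mul_mul_same Q
  rwa [← star_eq_conjTranspose, hQ.star_eq] at h

lemma exists_eq_conjTranspose_mul_self {𝕜 : Type*} [RCLike 𝕜] {M : Matrix n n 𝕜}
    (hM : M.PosSemidef) : ∃ X : Matrix n n 𝕜, M = Xᴴ * X := by
  classical
  open scoped MatrixOrder Matrix.Norms.L2Operator in
  exact CStarAlgebra.nonneg_iff_eq_star_mul_self.1 hM.nonneg

open scoped MatrixOrder Matrix.Norms.L2Operator in
lemma exists_posSemidef_smul_sub_conjTranspose_mul_self_mul (Z R : Matrix n n ℂ) :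
    ∃ b : ℝ, 0 ≤ b ∧ (b • (Rᴴ * R) - (Z * R)ᴴ * (Z * R)).PosSemidef := by
  classical
  refine ⟨‖Z‖ ^ 2, sq_nonneg _, Matrix.le_iff.1 ?_⟩
  calc (Z * R)ᴴ * (Z * R) = star R * (star Z * Z) * R := by
        simp only [star_eq_conjTranspose, conjTranspose_mul, Matrix.mul_assoc]
    _ ≤ star R * algebraMap ℝ _ (‖Z‖ ^ 2) * R :=
        star_left_conjugate_le_conjugate CStarAlgebra.star_mul_le_algebraMap_norm_sq R
    _ = ‖Z‖ ^ 2 • (Rᴴ * R) := by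
        rw [Algebra.algebraMap_eq_smul_one, Matrix.mul_smul, Matrix.mul_one, Matrix.smul_mul,
          star_eq_conjTranspose]

lemma exists_posSemidef_smul_sub_of_ker_le_ker {M N : Matrix n n ℂ} (hM : M.PosSemidef)
    (hN : N.PosSemidef) (h : LinearMap.ker M.mulVecLin ≤ LinearMap.ker N.mulVecLin) :
    ∃ c : ℝ, 1 < c ∧ (c • M - N).PosSemidef := by
  classical
  obtain ⟨R, rfl⟩ := exists_eq_conjTranspose_mul_self hM
  obtain ⟨X, rfl⟩ := exists_eq_conjTranspose_mul_self hN
  rw [ker_mulVecLin_conjTranspose_mul_self, ker_mulVecLin_conjTranspose_mul_self] at h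
  obtain ⟨φ, hφ⟩ := exists_comp_eq_of_ker_le_ker h
  obtain ⟨Z, rfl⟩ : ∃ Z : Matrix n n ℂ, X = Z * R := by
    refine ⟨LinearMap.toMatrix' φ, toLin'.injective ?_⟩
    rw [toLin'_mul, toLin'_toMatrix']
    exact hφ.symm
  obtain ⟨b, hb, hbound⟩ := exists_posSemidef_smul_sub_conjTranspose_mul_self_mul Z R
  refine ⟨b + 2, by linarith, ?_⟩
  rw [add_smul, add_sub_right_comm]
  exact hbound.add (hM.smul zero_le_two)

lemma ker_mulVecLin_add {𝕜 : Type*} [RCLike 𝕜] {M N : Matrix n n 𝕜} (hM : M.PosSemidef)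
    (hN : N.PosSemidef) :
    LinearMap.ker (M + N).mulVecLin = LinearMap.ker M.mulVecLin ⊓ LinearMap.ker N.mulVecLin := by
  ext x
  simp only [Submodule.mem_inf, LinearMap.mem_ker, mulVecLin_apply]
  rw [← (hM.add hN).dotProduct_mulVec_zero_iff, ← hM.dotProduct_mulVec_zero_iff,
    ← hN.dotProduct_mulVec_zero_iff, add_mulVec, dotProduct_add,
    add_eq_zero_iff_of_nonneg (hM.dotProduct_mulVec_nonneg x) (hN.dotProduct_mulVec_nonneg x)]

lemma eq_zero_of_rank_le_one_of_trace_eq_zero {𝕜 : Type*} [RCLike 𝕜] {M : Matrix n n 𝕜}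
    (hM : M.IsHermitian) (hrank : M.rank ≤ 1) (htrace : M.trace = 0) : M = 0 := by
  classical
  rw [hM.rank_eq_card_non_zero_eigs, Fintype.card_le_one_iff_subsingleton] at hrank
  rw [← hM.eigenvalues_eq_zero_iff]
  by_contra! h
  obtain ⟨i, hi⟩ := Function.ne_iff.1 h
  have other_eigenvalues : ∀ j ≠ i, hM.eigenvalues j = 0 := fun j hji => by
    by_contra hj
    exact hji (congrArg Subtype.val (Subsingleton.elim (⟨j, hj⟩ : {i // hM.eigenvalues i ≠ 0})
      ⟨i, hi⟩))
  rw [hM.trace_eq_sum_eigenvalues, Fintype.sum_eq_single i fun j hj => by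
    rw [other_eigenvalues j hj, RCLike.ofReal_zero]] at htrace
  exact hi (RCLike.ofReal_eq_zero.1 htrace)

lemma trace_mul_re_eq_zero_iff {M N : Matrix n n ℂ} (hM : M.PosSemidef) (hN : N.PosSemidef) :
    (M * N).trace.re = 0 ↔ M * N = 0 := by
  refine ⟨fun h => ?_, fun h => by rw [h, trace_zero, Complex.zero_re]⟩
  obtain ⟨X, rfl⟩ := exists_eq_conjTranspose_mul_self hM
  obtain ⟨Y, rfl⟩ := exists_eq_conjTranspose_mul_self hN
  have trace_eq : (Xᴴ * X * (Yᴴ * Y)).trace = ((X * Yᴴ) * (X * Yᴴ)ᴴ).trace := by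
    rw [Matrix.mul_assoc, trace_mul_comm]
    simp only [conjTranspose_mul, conjTranspose_conjTranspose, Matrix.mul_assoc]
  have trace_factor_nonneg := (posSemidef_self_mul_conjTranspose (X * Yᴴ)).trace_nonneg
  rw [trace_eq] at h
  have factor_eq_zero : X * Yᴴ = 0 :=
    trace_mul_conjTranspose_self_eq_zero_iff.1
      (Complex.ext h (Complex.nonneg_iff.1 trace_factor_nonneg).2.symm)
  rw [Matrix.mul_assoc, ← Matrix.mul_assoc X, factor_eq_zero, Matrix.zero_mul, Matrix.mul_zero]

lemma exists_isDensity_eq_smul {M : Matrix n n ℂ} (hM : M.PosSemidef) (hM0 : M ≠ 0) :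
    0 < M.trace.re ∧ ∃ ρ, IsDensity ρ ∧ M = M.trace.re • ρ := by
  obtain ⟨re_nonneg, im_eq⟩ := Complex.nonneg_iff.1 hM.trace_nonneg
  have trace_eq : (M.trace.re : ℂ) = M.trace := Complex.ext rfl im_eq
  have re_ne : M.trace.re ≠ 0 := fun h =>
    hM0 (hM.trace_eq_zero_iff.1 (by rw [← trace_eq, h, Complex.ofReal_zero]))
  refine ⟨re_nonneg.lt_of_ne' re_ne, M.trace.re⁻¹ • M, ⟨hM.smul (inv_nonneg.2 re_nonneg), ?_⟩,
    (smul_inv_smul₀ re_ne M).symm⟩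
  rw [trace_smul, Complex.real_smul, Complex.ofReal_inv, trace_eq, inv_mul_cancel₀]
  exact trace_eq ▸ Complex.ofReal_ne_zero.2 re_ne

lemma posSemidef_of_forall_isDensity {H : Matrix n n ℂ} (hH : H.IsHermitian)
    (h : ∀ ρ, IsDensity ρ → 0 ≤ (ρ * H).trace.re) : H.PosSemidef := by
  refine .of_dotProduct_mulVec_nonneg hH fun x => ?_
  refine Complex.nonneg_iff.2 ⟨?_, (hH.im_star_dotProduct_mulVec_self x).symm⟩
  have trace_eq : (vecMulVec x (star x) * H).trace = star x ⬝ᵥ (H *ᵥ x) := by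
    rw [vecMulVec_mul, trace_vecMulVec, dotProduct_mulVec, dotProduct_comm]
  rw [← trace_eq]
  rcases eq_or_ne (vecMulVec x (star x)) 0 with hx | hx
  · rw [hx, Matrix.zero_mul, trace_zero, Complex.zero_re]
  · obtain ⟨trace_pos, ρ, hρ, hxρ⟩ :=
      exists_isDensity_eq_smul (posSemidef_vecMulVec_self_star x) hx
    rw [hxρ, Matrix.smul_mul, trace_smul, Complex.smul_re]
    exact mul_nonneg trace_pos.le (h ρ hρ)

end PosSemidef

section DensityMatrices

variable {n : Type*} [Fintype n] {K L : Submodule ℂ (n → ℂ)} {ρ σ : Matrix n n ℂ}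

lemma isLinearMap_wpt {k : ℕ} (A : Fin k → Matrix n n ℂ) : IsLinearMap ℝ (wpt A) where
  map_add ρ σ := by ext; simp [wpt, Matrix.add_mul]
  map_smul c ρ := by ext; simp [wpt]

lemma continuous_wpt {k : ℕ} (A : Fin k → Matrix n n ℂ) : Continuous (wpt A) :=
  continuous_pi fun _ => Complex.continuous_re.comp (by fun_prop)

/-- The face of the set of density matrices determined by a subspace `K`: the density matrices
which vanish on `K`, equivalently those whose range is orthogonal to `K`. -/
def densityFace (K : Submodule ℂ (n → ℂ)) : Set (Matrix n n ℂ) :=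
  {ρ | IsDensity ρ ∧ K ≤ LinearMap.ker ρ.mulVecLin}

lemma densityFace_bot : densityFace (⊥ : Submodule ℂ (n → ℂ)) = {ρ | IsDensity ρ} := by
  simp [densityFace]

lemma mem_densityFace_sup :
    ρ ∈ densityFace (K ⊔ L) ↔ ρ ∈ densityFace K ∧ L ≤ LinearMap.ker ρ.mulVecLin := by
  simp only [densityFace, Set.mem_ofPred_eq, sup_le_iff, and_assoc]

lemma convex_densityFace (K : Submodule ℂ (n → ℂ)) : Convex ℝ (densityFace K) := by
  rintro ρ ⟨⟨hρ, trace_ρ⟩, hKρ⟩ σ ⟨⟨hσ, trace_σ⟩, hKσ⟩ a b ha hb hab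
  refine ⟨⟨(hρ.smul ha).add (hσ.smul hb), ?_⟩, fun x hx => ?_⟩
  · rw [trace_add, trace_smul, trace_smul, trace_ρ, trace_σ, ← add_smul, hab, one_smul]
  · have hρx : ρ *ᵥ x = 0 := hKρ hx
    have hσx : σ *ᵥ x = 0 := hKσ hx
    simp [hρx, hσx]

lemma norm_apply_sq_le_trace_conjTranspose_mul_self {𝕜 m : Type*} [RCLike 𝕜] [Fintype m]
    (X : Matrix m n 𝕜) (i : m) (j : n) : ‖X i j‖ ^ 2 ≤ RCLike.re (Xᴴ * X).trace := by
  have diag_eq (j : n) : RCLike.re ((Xᴴ * X) j j) = ∑ i, ‖X i j‖ ^ 2 := by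
    simp only [mul_apply, conjTranspose_apply, RCLike.star_def, RCLike.conj_mul, map_sum,
      ← RCLike.ofReal_pow, RCLike.ofReal_re]
  calc ‖X i j‖ ^ 2 ≤ ∑ i, ‖X i j‖ ^ 2 :=
        Finset.single_le_sum (fun i _ => sq_nonneg ‖X i j‖) (Finset.mem_univ i)
    _ ≤ ∑ j, ∑ i, ‖X i j‖ ^ 2 :=
        Finset.single_le_sum (f := fun j => ∑ i, ‖X i j‖ ^ 2)
          (fun j _ => Finset.sum_nonneg fun i _ => sq_nonneg ‖X i j‖) (Finset.mem_univ j)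
    _ = RCLike.re (Xᴴ * X).trace := by simp [trace, ← diag_eq]

lemma isCompact_setOf_isDensity : IsCompact {ρ : Matrix n n ℂ | IsDensity ρ} := by
  have image_eq : {ρ : Matrix n n ℂ | IsDensity ρ} =
      (fun X => Xᴴ * X) '' {X : Matrix n n ℂ | (Xᴴ * X).trace = 1} := by
    ext ρ
    constructor
    · rintro ⟨hρ, trace_ρ⟩
      obtain ⟨X, rfl⟩ := exists_eq_conjTranspose_mul_self hρ
      exact ⟨X, trace_ρ, rfl⟩
    · rintro ⟨X, hX, rfl⟩
      exact ⟨posSemidef_conjTranspose_mul_self X, hX⟩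
  have unit_ball : IsCompact (Set.univ.pi fun _ : n => Set.univ.pi fun _ : n =>
      Metric.closedBall (0 : ℂ) 1) :=
    isCompact_univ_pi fun _ => isCompact_univ_pi fun _ => isCompact_closedBall _ _
  rw [image_eq]
  refine IsCompact.image (unit_ball.of_isClosed_subset
    (isClosed_eq (by fun_prop) continuous_const) ?_) (by fun_prop)
  intro X hX i _ j _
  have h := norm_apply_sq_le_trace_conjTranspose_mul_self X i j
  rw [hX, RCLike.one_re] at h
  exact mem_closedBall_zero_iff.2 ((sq_le_one_iff₀ (norm_nonneg _)).1 h)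

lemma isCompact_densityFace (K : Submodule ℂ (n → ℂ)) : IsCompact (densityFace K) := by
  have closed : IsClosed {ρ : Matrix n n ℂ | K ≤ LinearMap.ker ρ.mulVecLin} := by
    simp only [SetLike.le_def, LinearMap.mem_ker, mulVecLin_apply, Set.ofPred_forall]
    exact isClosed_iInter fun x => isClosed_iInter fun _ =>
      isClosed_eq (continuous_id.matrix_mulVec continuous_const) continuous_const
  exact isCompact_setOf_isDensity.inter_right closed

lemma IsDensity.exists_mem_openSegment (hρ : IsDensity ρ) (hσ : IsDensity σ)
    (h : LinearMap.ker ρ.mulVecLin ≤ LinearMap.ker σ.mulVecLin) :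
    ∃ τ, IsDensity τ ∧ ρ ∈ openSegment ℝ σ τ := by
  obtain ⟨c, one_lt, hc⟩ := exists_posSemidef_smul_sub_of_ker_le_ker hρ.1 hσ.1 h
  have hc_sub : 0 < c - 1 := sub_pos.2 one_lt
  refine ⟨(c - 1)⁻¹ • (c • ρ - σ), ⟨hc.smul (inv_nonneg.2 hc_sub.le), ?_⟩,
    c⁻¹, (c - 1) / c, by positivity, by positivity, by field_simp; ring, ?_⟩
  · rw [trace_smul, trace_sub, trace_smul, hρ.2, hσ.2, Complex.real_smul, Complex.real_smul,
      mul_one, ← Complex.ofReal_one, ← Complex.ofReal_sub, ← Complex.ofReal_mul,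
      inv_mul_cancel₀ hc_sub.ne']
  · have coeff_eq : (c - 1) / c * (c - 1)⁻¹ = c⁻¹ := by field_simp
    rw [smul_smul, coeff_eq, smul_sub, inv_smul_smul₀ (by positivity), add_sub_cancel]

lemma ker_add_eq_of_mem_densityFace (hcard : Fintype.card n ≤ Module.finrank ℂ K + 2)
    (hρ : ρ ∈ densityFace K) (hσ : σ ∈ densityFace K) (hne : ρ ≠ σ) :
    LinearMap.ker (ρ + σ).mulVecLin = K := by
  have ker_eq := ker_mulVecLin_add hρ.1.1 hσ.1.1
  have K_le : K ≤ LinearMap.ker (ρ + σ).mulVecLin := ker_eq ▸ le_inf hρ.2 hσ.2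
  have ker_le : LinearMap.ker (ρ + σ).mulVecLin ≤ LinearMap.ker (ρ - σ).mulVecLin := by
    intro x hx
    rw [ker_eq] at hx
    have hρx : ρ *ᵥ x = 0 := hx.1
    have hσx : σ *ᵥ x = 0 := hx.2
    rw [LinearMap.mem_ker, mulVecLin_apply, sub_mulVec, hρx, hσx, sub_zero]
  refine (Submodule.eq_of_le_of_finrank_le K_le ?_).symm
  by_contra! hlt
  have rank_add_ker := (ρ - σ).mulVecLin.finrank_range_add_finrank_ker
  rw [Module.finrank_fintype_fun_eq_card] at rank_add_ker
  have rank_le : (ρ - σ).rank ≤ 1 := by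
    have := Submodule.finrank_mono ker_le
    rw [Matrix.rank]
    omega
  have trace_eq : (ρ - σ).trace = 0 := by rw [trace_sub, hρ.1.2, hσ.1.2, sub_self]
  exact hne (sub_eq_zero.1 (eq_zero_of_rank_le_one_of_trace_eq_zero
    (hρ.1.1.1.sub hσ.1.1.1) rank_le trace_eq))

end DensityMatrices

section Pencil

variable {n : Type*} [DecidableEq n] {k : ℕ} {A : Fin k → Matrix n n ℂ}

/-- The matrix `∑ uᵢ Aᵢ - c` representing the affine functional `⟨u, ·⟩ - c` on the joint
numerical range. -/
def pencil (A : Fin k → Matrix n n ℂ) (u : Fin k → ℝ) (c : ℝ) : Matrix n n ℂ :=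
  ∑ i, u i • A i - c • 1

lemma isHermitian_pencil (hA : ∀ i, (A i).IsHermitian) (u : Fin k → ℝ) (c : ℝ) :
    (pencil A u c).IsHermitian := by
  simp [pencil, IsHermitian, conjTranspose_sum, (hA _).eq]

variable [Fintype n]

lemma trace_mul_pencil_re {ρ : Matrix n n ℂ} (hρ : ρ.trace = 1) (u : Fin k → ℝ) (c : ℝ) :
    (ρ * pencil A u c).trace.re = dotR u (wpt A ρ) - c := by
  simp [pencil, dotR, wpt, Matrix.mul_sub, Matrix.mul_sum, trace_sum, hρ]

lemma posSemidef_pencil (hA : ∀ i, (A i).IsHermitian) {u : Fin k → ℝ} {c : ℝ}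
    (h : ∀ y ∈ JNR A, c ≤ dotR u y) : (pencil A u c).PosSemidef := by
  refine posSemidef_of_forall_isDensity (isHermitian_pencil hA u c) fun ρ hρ => ?_
  rw [trace_mul_pencil_re hρ.2, sub_nonneg]
  exact h _ ⟨ρ, hρ, rfl⟩

end Pencil

section JointNumericalRange

variable {n : Type*} [Fintype n] {k : ℕ} {A : Fin k → Matrix n n ℂ} {K : Submodule ℂ (n → ℂ)}

lemma JNR_eq_image_densityFace_bot (A : Fin k → Matrix n n ℂ) :
    JNR A = wpt A '' densityFace ⊥ := by
  rw [densityFace_bot, JNR]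

lemma convex_image_densityFace (A : Fin k → Matrix n n ℂ) (K : Submodule ℂ (n → ℂ)) :
    Convex ℝ (wpt A '' densityFace K) :=
  (convex_densityFace K).is_linear_image (isLinearMap_wpt A)

lemma isCompact_image_densityFace (A : Fin k → Matrix n n ℂ) (K : Submodule ℂ (n → ℂ)) :
    IsCompact (wpt A '' densityFace K) :=
  (isCompact_densityFace K).image (continuous_wpt A)

lemma convex_JNR (A : Fin k → Matrix n n ℂ) : Convex ℝ (JNR A) :=
  JNR_eq_image_densityFace_bot A ▸ convex_image_densityFace A ⊥

lemma IsExposedFace.exists_submodule_forall_mem_iff (hA : ∀ i, (A i).IsHermitian)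
    {F : Set (Fin k → ℝ)} (hF : IsExposedFace (JNR A) F) (hne : F.Nonempty) :
    ∃ L : Submodule ℂ (n → ℂ), ∀ ρ, IsDensity ρ →
      (wpt A ρ ∈ F ↔ L ≤ LinearMap.ker ρ.mulVecLin) := by
  classical
  obtain ⟨u, rfl⟩ := hF
  obtain ⟨m, hm, m_min⟩ := hne
  refine ⟨LinearMap.range (pencil A u (dotR u m)).mulVecLin, fun ρ hρ => ?_⟩
  have hρA : wpt A ρ ∈ JNR A := ⟨ρ, hρ, rfl⟩
  rw [range_mulVecLin_le_ker_iff, ← trace_mul_re_eq_zero_iff hρ.1 (posSemidef_pencil hA m_min),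
    trace_mul_pencil_re hρ.2, sub_eq_zero]
  exact ⟨fun h => (h.2 m hm).antisymm (m_min _ hρA), fun h => ⟨hρA, h ▸ m_min⟩⟩

lemma IsExposedFace.exists_eq_image_densityFace (hA : ∀ i, (A i).IsHermitian)
    (hK : JNR A = wpt A '' densityFace K) {F : Set (Fin k → ℝ)}
    (hF : IsExposedFace (JNR A) F) (hne : F.Nonempty) (hFA : F ≠ JNR A) :
    ∃ L, K < L ∧ F = wpt A '' densityFace L := by
  obtain ⟨L, hL⟩ := hF.exists_submodule_forall_mem_iff hA hne
  have F_eq : F = wpt A '' densityFace (K ⊔ L) := by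
    refine Set.Subset.antisymm (fun y hy => ?_) ?_
    · obtain ⟨ρ, hρ, rfl⟩ := hK ▸ hF.isExtreme.subset hy
      exact ⟨ρ, mem_densityFace_sup.2 ⟨hρ, (hL ρ hρ.1).1 hy⟩, rfl⟩
    · rintro _ ⟨ρ, hρ, rfl⟩
      exact (hL ρ hρ.1).2 (mem_densityFace_sup.1 hρ).2
  refine ⟨K ⊔ L, le_sup_left.lt_of_ne fun h => hFA ?_, F_eq⟩
  rw [F_eq, ← h, hK]

namespace IsFaceOf

variable {G : Set (Fin k → ℝ)}

lemma image_densityFace_subset (hcard : Fintype.card n ≤ Module.finrank ℂ K + 2)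
    (hG : IsFaceOf (JNR A) G) (hGn : G.Nontrivial) (hGK : G ⊆ wpt A '' densityFace K) :
    wpt A '' densityFace K ⊆ G := by
  rintro _ ⟨δ, hδ, rfl⟩
  obtain ⟨_, hαG, _, hβG, hne⟩ := hGn
  obtain ⟨α, hα, rfl⟩ := hGK hαG
  obtain ⟨β, hβ, rfl⟩ := hGK hβG
  let f := (isLinearMap_wpt A).mk'
  have ker_le : LinearMap.ker (midpoint ℝ α β).mulVecLin ≤ LinearMap.ker δ.mulVecLin := by
    refine le_trans (fun x hx => ?_) hδ.2
    rw [← ker_add_eq_of_mem_densityFace hcard hα hβ fun h => hne (congrArg _ h)]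
    simpa [midpoint_eq_smul_add, ← smul_add] using hx
  obtain ⟨τ, hτ, hmid⟩ :=
    ((convex_densityFace K).midpoint_mem hα hβ).1.exists_mem_openSegment hδ.1 ker_le
  have hmid_G : f (midpoint ℝ α β) ∈ G := by
    rw [midpoint_eq_smul_add, map_smul, map_add, ← midpoint_eq_smul_add]
    exact hG.1.midpoint_mem hαG hβG
  exact hG.2.left_mem_of_mem_openSegment ⟨δ, hδ.1, rfl⟩ ⟨τ, hτ, rfl⟩ hmid_G
    (image_openSegment ℝ f.toAffineMap δ τ ▸ Set.mem_image_of_mem f hmid)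

lemma isExposedFace (hA : ∀ i, (A i).IsHermitian) (hK : JNR A = wpt A '' densityFace K)
    (hcard : Fintype.card n ≤ Module.finrank ℂ K + 3) (hG : IsFaceOf (JNR A) G)
    (hGn : G.Nontrivial) : IsExposedFace (JNR A) G := by
  rcases eq_or_ne G (JNR A) with rfl | hGA
  · exact isExposedFace_self _
  obtain ⟨F, hF, hGF, hFA⟩ := hG.exists_isExposedFace_superset (convex_JNR A) hGn.nonempty hGA
  obtain ⟨L, hKL, rfl⟩ := hF.exists_eq_image_densityFace hA hK (hGn.nonempty.mono hGF) hFA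
  have finrank_lt := Submodule.finrank_lt_finrank_of_lt hKL
  rwa [hGF.antisymm (hG.image_densityFace_subset (by omega) hGn hGF)]

end IsFaceOf

section CommonEigenspace

variable {P : Matrix n n ℂ} {p : Fin k → ℝ}

lemma mem_JNR_of_mul_eq_smul (hP : IsStarProjection P) (hP0 : P ≠ 0)
    (hAP : ∀ i, A i * P = (p i : ℂ) • P) : p ∈ JNR A := by
  have hP_psd : P.PosSemidef := by
    have h := posSemidef_conjTranspose_mul_self P
    rwa [← star_eq_conjTranspose, hP.isSelfAdjoint.star_eq, hP.isIdempotentElem.eq] at h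
  obtain ⟨trace_pos, ρ, hρ, P_eq⟩ := exists_isDensity_eq_smul hP_psd hP0
  refine ⟨ρ, hρ, ?_⟩
  ext i
  have trace_eq : (P * A i).trace.re = p i * P.trace.re := by
    rw [trace_mul_comm, hAP, trace_smul, smul_eq_mul, Complex.re_ofReal_mul]
  nth_rw 1 [P_eq] at trace_eq
  rw [Matrix.smul_mul, trace_smul, Complex.smul_re, smul_eq_mul, mul_comm] at trace_eq
  exact mul_right_cancel₀ trace_pos.ne' trace_eq

lemma wpt_eq_smul_add_wpt_compression [DecidableEq n] (hA : ∀ i, (A i).IsHermitian)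
    (hP : IsStarProjection P) (hAP : ∀ i, A i * P = (p i : ℂ) • P) (ρ : Matrix n n ℂ) :
    wpt A ρ = (ρ * P).trace.re • p + wpt A ((1 - P) * ρ * (1 - P)) := by
  have hPA (i : Fin k) : P * A i = (p i : ℂ) • P := by
    have h := congrArg star (hAP i)
    rwa [star_mul, star_smul, hP.isSelfAdjoint.star_eq, star_eq_conjTranspose, (hA i).eq,
      RCLike.star_def, Complex.conj_ofReal] at h
  have compression_eq (i : Fin k) : (1 - P) * A i * (1 - P) = A i - (p i : ℂ) • P := by
    simp [Matrix.sub_mul, Matrix.mul_sub, hPA, hAP, hP.isIdempotentElem.eq]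
  ext i
  have trace_eq : ((1 - P) * ρ * (1 - P) * A i).trace = (ρ * (A i - (p i : ℂ) • P)).trace := by
    rw [← compression_eq, Matrix.mul_assoc, Matrix.mul_assoc, trace_mul_comm]
    simp only [Matrix.mul_assoc]
  have trace_re_eq := congrArg Complex.re trace_eq
  simp only [Matrix.mul_sub ρ, Matrix.mul_smul, trace_sub, trace_smul, smul_eq_mul, Complex.sub_re,
    Complex.re_ofReal_mul] at trace_re_eq
  change (ρ * A i).trace.re = (ρ * P).trace.re * p i + ((1 - P) * ρ * (1 - P) * A i).trace.re
  rw [trace_re_eq]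
  ring

lemma trace_mul_re_add_trace_compression_re [DecidableEq n] (hP : IsStarProjection P)
    {ρ : Matrix n n ℂ} (hρ : IsDensity ρ) :
    (ρ * P).trace.re + ((1 - P) * ρ * (1 - P)).trace.re = 1 := by
  rw [trace_mul_mul_self_of_isIdempotentElem hP.one_sub.isIdempotentElem, ← Complex.add_re,
    ← trace_add, ← Matrix.mul_add, add_sub_cancel, Matrix.mul_one, hρ.2, Complex.one_re]

lemma wpt_mem_convexHull_insert (hA : ∀ i, (A i).IsHermitian) (hP : IsStarProjection P)
    (hAP : ∀ i, A i * P = (p i : ℂ) • P) {ρ : Matrix n n ℂ} (hρ : IsDensity ρ) :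
    wpt A ρ ∈ convexHull ℝ (insert p (wpt A '' densityFace (LinearMap.range P.mulVecLin))) := by
  classical
  have traces_add := trace_mul_re_add_trace_compression_re hP hρ
  have trace_mul_nonneg : 0 ≤ (ρ * P).trace.re :=
    trace_mul_mul_self_of_isIdempotentElem hP.isIdempotentElem ρ ▸
      (Complex.nonneg_iff.1 (posSemidef_mul_mul_self_of_isSelfAdjoint hρ.1 hP.2).trace_nonneg).1
  have p_mem := subset_convexHull ℝ _
    (Set.mem_insert p (wpt A '' densityFace (LinearMap.range P.mulVecLin)))
  rw [wpt_eq_smul_add_wpt_compression hA hP hAP]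
  rcases eq_or_ne ((1 - P) * ρ * (1 - P)) 0 with hτ | hτ
  · rw [hτ, trace_zero, Complex.zero_re, add_zero] at traces_add
    rwa [hτ, traces_add, one_smul, (isLinearMap_wpt A).map_zero, add_zero]
  · obtain ⟨trace_pos, σ, hσ, τ_eq⟩ := exists_isDensity_eq_smul
      (posSemidef_mul_mul_self_of_isSelfAdjoint hρ.1 hP.one_sub.2) hτ
    have σ_mul_P : σ * P = 0 := by
      have h : (1 - P) * ρ * (1 - P) * P = 0 := by
        rw [Matrix.mul_assoc _ (1 - P) P, hP.isIdempotentElem.one_sub_mul_self, Matrix.mul_zero]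
      rw [τ_eq, Matrix.smul_mul] at h
      exact (smul_eq_zero.1 h).resolve_left trace_pos.ne'
    have σ_mem : σ ∈ densityFace (LinearMap.range P.mulVecLin) :=
      ⟨hσ, range_mulVecLin_le_ker_iff.2 σ_mul_P⟩
    nth_rw 1 [τ_eq]
    rw [(isLinearMap_wpt A).map_smul]
    exact convex_convexHull ℝ _ p_mem
      (subset_convexHull ℝ _ (Set.mem_insert_of_mem p (Set.mem_image_of_mem _ σ_mem)))
      trace_mul_nonneg trace_pos.le traces_add

lemma JNR_eq_convexHull_insert (hA : ∀ i, (A i).IsHermitian) (hP : IsStarProjection P)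
    (hP0 : P ≠ 0) (hAP : ∀ i, A i * P = (p i : ℂ) • P) :
    JNR A = convexHull ℝ (insert p (wpt A '' densityFace (LinearMap.range P.mulVecLin))) := by
  refine Set.Subset.antisymm ?_ (convexHull_min (Set.insert_subset
    (mem_JNR_of_mul_eq_smul hP hP0 hAP) (Set.image_mono fun ρ hρ => hρ.1)) (convex_JNR A))
  rintro _ ⟨ρ, hρ, rfl⟩
  exact wpt_mem_convexHull_insert hA hP hAP hρ

end CommonEigenspace

end JointNumericalRange

theorem stmt6_general {n : Type*} [Fintype n] {k : ℕ} (A : Fin k → Matrix n n ℂ)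
    (hA : ∀ i, (A i).IsHermitian) (P : Matrix n n ℂ) (hP : IsStarProjection P) (hP0 : P ≠ 0)
    (hcard : Fintype.card n ≤ P.rank + 3) (p : Fin k → ℝ)
    (hAP : ∀ i, A i * P = (p i : ℂ) • P)
    (hG : ∃ G, IsFaceOf (JNR A) G ∧ convDim G ≠ 0 ∧ ¬ IsExposedFace (JNR A) G) :
    IsCornerPoint (JNR A) p := by
  obtain ⟨G, hG, hdim, hGexp⟩ := hG
  let K := LinearMap.range P.mulVecLin
  have hull := JNR_eq_convexHull_insert hA hP hP0 hAP
  by_cases hp : p ∈ wpt A '' densityFace K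
  · rw [Set.insert_eq_of_mem hp, (convex_image_densityFace A K).convexHull_eq] at hull
    exact absurd (hG.isExposedFace hA hull hcard (nontrivial_of_convDim_ne_zero hdim)) hGexp
  · rw [hull]
    exact isCornerPoint_convexHull_insert (isCompact_image_densityFace A K)
      (convex_image_densityFace A K) hp

/-- if `A₁,A₂,A₃` have a common reducing projection `P` on which
they act as the scalars `p₁,p₂,p₃`, and `W` has a one-dimensional nonexposed
face, then `(p₁,p₂,p₃)` is a corner point of `W`. -/
theorem stmt6 (A : Fin 3 → Matrix (Fin 4) (Fin 4) ℂ)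
    (hA : ∀ i, (A i).IsHermitian)
    (P : Matrix (Fin 4) (Fin 4) ℂ)
    (hPherm : Pᴴ = P) (hPproj : P * P = P) (hP0 : P ≠ 0)
    (p : Fin 3 → ℝ)
    (hAP : ∀ i, A i * P = (p i : ℂ) • P)
    (hG : ∃ G, IsFaceOf (JNR A) G ∧ convDim G = 1 ∧
      ¬ IsExposedFace (JNR A) G) :
    IsCornerPoint (JNR A) p := by
  have rank_pos := rank_pos_of_ne_zero hP0
  exact stmt6_general A hA P ⟨hPproj, hPherm⟩ hP0 (by rw [Fintype.card_fin]; omega) p hAP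
    (hG.imp fun _ ⟨hface, hdim, hexp⟩ => ⟨hface, by simp [hdim], hexp⟩)
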